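/- There is a constant C depending only on d such that for every integer n ≥ 1 and every set Θ of unit vectors in ℝ^d with pairwise distances ≥ 2^{−4−nγ}, one has sup over ξ ∈ ℝ^d∖{0} of Σ_{ν∈Θ} |φ₀(2^{nγ}·n^{−5}·⟨ν, ξ/|ξ|⟩)| ≤ C·2^{nγ(d−2)}·n^5. -/

import Mathlib

open MeasureTheory Filter Metric
open scoped ENNReal FourierTransform RealInnerProductSpace Topology

noncomputable section

/-- Euclidean space `ℝ^d`. -/
abbrev Eu (d : ℕ) : Type := EuclideanSpace ℝ (Fin d)

/-- The parameter `γ = 1/2`. -/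
def gam : ℝ := 1/2

/-- `ℓ(n) = ⌊2 log₂ n⌋ + 2`. -/
def elln (n : ℕ) : ℤ := ⌊2 * Real.logb 2 n⌋ + 2

/-- `ℓ_ε(n) = ⌊2 ε⁻¹ log₂ n⌋ + 2`. -/
def ellEps (ε : ℝ) (n : ℕ) : ℤ := ⌊2 * ε⁻¹ * Real.logb 2 n⌋ + 2

/-- `n(ε) = 10^10 d ε⁻¹ log₂(2 ε⁻¹)`. -/
def nEps (d : ℕ) (ε : ℝ) : ℝ := 10 ^ 10 * d * ε⁻¹ * Real.logb 2 (2 * ε⁻¹)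

variable {d : ℕ}

/-- `∫₀¹ a(sx + (1-s)y) ds`. -/
def avg01 (a : Eu d → ℝ) (x y : Eu d) : ℝ := ∫ s in (0:ℝ)..1, a (s • x + (1 - s) • y)

/-- `∫ ϑ(s) a(sx + (1-s)y) ds`. -/
def avgTh (ϑ : ℝ → ℝ) (a : Eu d → ℝ) (x y : Eu d) : ℝ :=
  ∫ s : ℝ, ϑ s * a (s • x + (1 - s) • y)

/-- The dyadic piece `K_j(x) = (φ(2^{-j}x) - φ(2^{-j+1}x)) K(x)`. -/
def Kdyad (K φ : Eu d → ℝ) (j : ℤ) (x : Eu d) : ℝ :=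
  (φ ((2:ℝ) ^ (-j) • x) - φ ((2:ℝ) ^ (-j+1) • x)) * K x

/-- `Φ_m(x) = 2^{-md} Φ(2^{-m} x)`. -/
def PhiM (Φ : Eu d → ℝ) (m : ℤ) (x : Eu d) : ℝ :=
  (2:ℝ) ^ (-(m * (d:ℤ))) * Φ ((2:ℝ) ^ (-m) • x)

/-- `K_j^n = K_j * Φ_{j - ℓ_ε(n)}`. -/
def Kjn (K φ Φ : Eu d → ℝ) (ε : ℝ) (n : ℕ) (j : ℤ) (x : Eu d) : ℝ :=
  ∫ y, Kdyad K φ j (x - y) * PhiM Φ (j - ellEps ε n) y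

/-- The operator `T_j` with kernel `K_j(x-y) ∫₀¹ a(sx+(1-s)y) ds`. -/
def TopJ (K φ a : Eu d → ℝ) (j : ℤ) (g : Eu d → ℂ) (x : Eu d) : ℂ :=
  ∫ y, ((Kdyad K φ j (x - y) * avg01 a x y : ℝ) : ℂ) * g y

/-- The operator `T_j^n` with kernel `K_j^n(x-y) ∫ ϑ_n(s) a(sx+(1-s)y) ds`. -/
def Tnop (K φ Φ a : Eu d → ℝ) (ε : ℝ) (ϑn : ℝ → ℝ) (n : ℕ) (j : ℤ) (g : Eu d → ℂ)
    (x : Eu d) : ℂ :=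
  ∫ y, ((Kjn K φ Φ ε n j (x - y) * avgTh ϑn a x y : ℝ) : ℂ) * g y

/-- The operator `T_j^{n,ν}` with kernel `K_j^{n,ν}(x-y) ∫ ϑ_n(s) a(sx+(1-s)y) ds`,
where `K_j^{n,ν} = K_j^n ⋅ χ` (with `χ = χ_{n,ν}`). -/
def Tnnu (K φ Φ a : Eu d → ℝ) (χv : Eu d → ℝ) (ε : ℝ) (ϑn : ℝ → ℝ) (n : ℕ) (j : ℤ)
    (g : Eu d → ℂ) (x : Eu d) : ℂ :=
  ∫ y, ((Kjn K φ Φ ε n j (x - y) * χv (x - y) * avgTh ϑn a x y : ℝ) : ℂ) * g y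

/-- `𝒦_{j,y}^{n,ν}[g](x) = K_j^{n,ν}(x-y) ∫ ϑ_n(s) g(sx+(1-s)y) ds` (with `χv = χ_{n,ν}`). -/
def Kcal (K φ Φ : Eu d → ℝ) (χv : Eu d → ℝ) (ε : ℝ) (ϑn : ℝ → ℝ) (n : ℕ) (j : ℤ)
    (y : Eu d) (g : Eu d → ℂ) (x : Eu d) : ℂ :=
  ((Kjn K φ Φ ε n j (x - y) * χv (x - y) : ℝ) : ℂ) *
    ∫ s : ℝ, (ϑn s : ℂ) * g (s • x + (1 - s) • y)

/-- `P_m`, convolution with `Φ_m`. -/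
def Pop (Φ : Eu d → ℝ) (m : ℤ) (g : Eu d → ℂ) (x : Eu d) : ℂ :=
  ∫ y, ((PhiM Φ m (x - y) : ℝ) : ℂ) * g y

/-- The (closed) cube with center `c` and sidelength `2^l`. -/
def cube (c : Eu d) (l : ℤ) : Set (Eu d) := {y | ∀ k, |y k - c k| ≤ (2:ℝ) ^ (l - 1)}

/-- `B_m = Σ_{Q : L(Q) = m} b_Q`. -/
def Bfun {ι : Type} (Lq : ι → ℤ) (b : ι → Eu d → ℂ) (m : ℤ) (x : Eu d) : ℂ :=
  ∑' i : {i : ι // Lq i = m}, b i x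

/-- The Fourier multiplier operator with multiplier `β_k(ξ) m(ξ)`,
`β_k(ξ) = φ(2^k ξ) - φ(2^{k+1} ξ)`, realized as convolution with the Schwartz kernel
`𝓕⁻[β_k ⋅ m]`. -/
def LamM (φ : Eu d → ℝ) (mf : Eu d → ℝ) (k : ℤ) (g : Eu d → ℂ) (x : Eu d) : ℂ :=
  ∫ y, 𝓕⁻ (fun ξ : Eu d =>
      (((φ ((2:ℝ) ^ k • ξ) - φ ((2:ℝ) ^ (k+1) • ξ)) * mf ξ : ℝ) : ℂ)) (x - y) * g y

/-- The Littlewood–Paley operator `Λ_k`, Fourier multiplier `β_k`. -/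
def Lam (φ : Eu d → ℝ) (k : ℤ) (g : Eu d → ℂ) (x : Eu d) : ℂ :=
  LamM φ (fun _ => 1) k g x

/-- `V_k`, the Fourier multiplier operator with multiplier `φ(2^k ξ)`, realized as
convolution with `𝓕⁻[φ(2^k ⬝)]`. -/
def Vop (φ : Eu d → ℝ) (k : ℤ) (g : Eu d → ℂ) (x : Eu d) : ℂ :=
  ∫ y, 𝓕⁻ (fun ξ : Eu d => ((φ ((2:ℝ) ^ k • ξ) : ℝ) : ℂ)) (x - y) * g y

/-- The multiplier `ξ ↦ φ₀(r ⟨ν, ξ/|ξ|⟩)`. -/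
def mDir (φ₀ : ℝ → ℝ) (r : ℝ) (ν : Eu d) (ξ : Eu d) : ℝ := φ₀ (r * ⟪ν, ‖ξ‖⁻¹ • ξ⟫)

/-- The tube `τ_i^{n,ν}`. -/
def tubeT (ν : Eu d) (n : ℕ) (i : ℤ) : Set (Eu d) :=
  {x | |⟪x, ν⟫| ≤ (2:ℝ) ^ (i + 2) ∧ ‖x - ⟪x, ν⟫ • ν‖ ≤ (2:ℝ) ^ (((i:ℝ) + 2) - gam * n)}

/-- `H_i^{n,ν} = 2^{-id} 1_{τ_i^{n,ν}}`. -/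
def Hfn (ν : Eu d) (n : ℕ) (i : ℤ) (x : Eu d) : ℝ :=
  Set.indicator (tubeT ν n i) (fun _ => (2:ℝ) ^ (-(i * (d:ℤ)))) x

/-- Convolution of real functions. -/
def convR (f g : Eu d → ℝ) (x : Eu d) : ℝ := ∫ y, f (x - y) * g y

/-!
With `e = ξ/|ξ|`, the bounded function `φ₀` restricts the sum to the slab `|⟨ν, e⟩| ≤ t`, where
`t = 2^(-nγ) n^5`, so it is enough to count the unit vectors `ν` in this slab when they are
`2r`-separated with `r = 2^(-5-nγ)`. The disjoint balls `B(ν, r)` lie in the cone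
`|⟨x, e⟩| ≤ 2(t + r)|x|`, between the spheres of radii `1 - r` and `1 + r`. By homogeneity, the part
of the cone between these spheres has volume `((1 + r)^d - (1 - r)^d) V = O(r V)`, where `V`, the
volume of its part in the unit ball, is at most that of a box with one short side, hence `O(t + r)`.
Dividing by the volume of a ball of radius `r` gives `O((t + r) r^(1-d)) = O(2^(nγ(d-2)) n^5)`
vectors. The cone takes the place of the slab because the latter is not invariant under dilation.
-/

open Module
open scoped Pointwise

section Cone

variable {E : Type*} [NormedAddCommGroup E] [NormedSpace ℝ E] [FiniteDimensional ℝ E]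
  [MeasurableSpace E] [BorelSpace E] (μ : Measure E) [μ.IsAddHaarMeasure] {K : Set E}

theorem measureReal_cone_inter_ball (hK : ∀ ⦃s : ℝ⦄, 0 < s → ∀ ⦃x⦄, x ∈ K → s • x ∈ K) {s : ℝ}
    (hs : 0 < s) : μ.real (K ∩ ball 0 s) = s ^ finrank ℝ E * μ.real (K ∩ ball 0 1) := by
  have hsK : s • K = K := by
    refine (Set.smul_set_subset_iff.2 fun x hx => hK hs hx).antisymm fun x hx => ?_
    exact (Set.mem_smul_set_iff_inv_smul_mem₀ hs.ne' K x).2 (hK (inv_pos.2 hs) hx)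
  have hdilate : K ∩ ball 0 s = s • (K ∩ ball 0 1) := by
    rw [Set.smul_set_inter₀ hs.ne', hsK, smul_unitBall_of_pos hs]
  rw [hdilate, measureReal_def, Measure.addHaar_smul, ENNReal.toReal_mul,
    ENNReal.toReal_ofReal (abs_nonneg _), abs_of_pos (pow_pos hs _), measureReal_def]

theorem measureReal_cone_inter_shell (hK : ∀ ⦃s : ℝ⦄, 0 < s → ∀ ⦃x⦄, x ∈ K → s • x ∈ K)
    (hKm : MeasurableSet K) {a b : ℝ} (ha : 0 < a) (hab : a ≤ b) :
    μ.real (K ∩ (ball 0 b \ ball 0 a)) =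
      (b ^ finrank ℝ E - a ^ finrank ℝ E) * μ.real (K ∩ ball 0 1) := by
  have hsub : K ∩ ball 0 a ⊆ K ∩ ball 0 b := Set.inter_subset_inter_right K (ball_subset_ball hab)
  have hfin : μ (K ∩ ball 0 b) ≠ ⊤ :=
    measure_ne_top_of_subset Set.inter_subset_right measure_ball_lt_top.ne
  rw [Set.inter_sdiff_distrib_left, measureReal_sdiff hsub (hKm.inter measurableSet_ball) hfin,
    measureReal_cone_inter_ball μ hK (ha.trans_le hab), measureReal_cone_inter_ball μ hK ha,
    sub_mul]

theorem card_mul_measureReal_ball_le {S : Finset E} {r : ℝ} (hr : 0 < r)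
    (hsep : (S : Set E).Pairwise fun x y => 2 * r ≤ dist x y) {A : Set E} (hA : μ A ≠ ⊤)
    (hsub : ∀ x ∈ S, ball x r ⊆ A) :
    S.card * (r ^ finrank ℝ E * μ.real (ball 0 1)) ≤ μ.real A := by
  have hdisj : (S : Set E).PairwiseDisjoint (ball · r) := fun x hx y hy hxy =>
    ball_disjoint_ball (by linarith [hsep hx hy hxy])
  have hball (x : E) : μ.real (ball x r) = r ^ finrank ℝ E * μ.real (ball 0 1) := by
    rw [measureReal_def, μ.addHaar_ball_of_pos x hr, ENNReal.toReal_mul,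
      ENNReal.toReal_ofReal (pow_nonneg hr.le _), measureReal_def]
  calc S.card * (r ^ finrank ℝ E * μ.real (ball 0 1)) = ∑ x ∈ S, μ.real (ball x r) := by
        simp [hball]
    _ = μ.real (⋃ x ∈ S, ball x r) :=
        (measureReal_biUnion_finset hdisj (fun _ _ => measurableSet_ball)
          fun _ _ => measure_ball_lt_top.ne).symm
    _ ≤ μ.real A := measureReal_mono (Set.iUnion₂_subset hsub) hA

end Cone

theorem one_add_pow_sub_one_sub_pow_le {r : ℝ} (hr : 0 ≤ r) (hr1 : r ≤ 1) (m : ℕ) :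
    (1 + r) ^ m - (1 - r) ^ m ≤ 2 * r * m * 2 ^ (m - 1) :=
  calc (1 + r) ^ m - (1 - r) ^ m ≤ |(1 + r) ^ m - (1 - r) ^ m| := le_abs_self _
    _ ≤ |1 + r - (1 - r)| * m * max |1 + r| |1 - r| ^ (m - 1) := abs_pow_sub_pow_le _ _ _
    _ = 2 * r * m * (1 + r) ^ (m - 1) := by
        rw [abs_of_nonneg (by linarith : 0 ≤ 1 + r - (1 - r)),
          abs_of_nonneg (by linarith : 0 ≤ 1 + r), abs_of_nonneg (sub_nonneg.2 hr1),
          max_eq_left (by linarith)]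
        ring
    _ ≤ 2 * r * m * 2 ^ (m - 1) := by gcongr; linarith

section Slab

variable {E : Type*} [NormedAddCommGroup E] [InnerProductSpace ℝ E] [FiniteDimensional ℝ E]
  [MeasurableSpace E] [BorelSpace E]

theorem volume_orthonormal_box {ι : Type*} [Fintype ι] (b : OrthonormalBasis ι ℝ E) (c : ι → ℝ) :
    volume {x : E | ∀ i, |⟪b i, x⟫| ≤ c i} = ∏ i, ENNReal.ofReal (2 * c i) := by
  have hcoord : MeasurePreserving (fun x : E => WithLp.ofLp (b.repr x)) volume volume :=
    (PiLp.volume_preserving_ofLp ι).comp b.measurePreserving_repr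
  have hpre : {x : E | ∀ i, |⟪b i, x⟫| ≤ c i} =
      (fun x : E => WithLp.ofLp (b.repr x)) ⁻¹' Set.Icc (-c) c := by
    ext x
    simp [abs_le, Pi.le_def, forall_and, b.repr_apply_apply]
  rw [hpre, hcoord.measure_preimage measurableSet_Icc.nullMeasurableSet, Real.volume_Icc_pi]
  simp [two_mul]

theorem volume_real_slab_inter_ball_le {e : E} (he : ‖e‖ = 1) {a R : ℝ} (ha : 0 ≤ a)
    (hR : 0 ≤ R) :
    volume.real ({x : E | |⟪x, e⟫| ≤ a} ∩ ball 0 R) ≤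
      2 * a * (2 * R) ^ (finrank ℝ E - 1) := by
  classical
  obtain ⟨u, b, heu, hb⟩ : ∃ (u : Finset E) (b : OrthonormalBasis u ℝ E),
      {e} ⊆ (u : Set E) ∧ ⇑b = ((↑) : u → E) :=
    Orthonormal.exists_orthonormalBasis_extension (orthonormal_subsingleton_iff.2 (by simpa))
  let i₀ : u := ⟨e, heu rfl⟩
  let c : u → ℝ := Function.update (fun _ => R) i₀ a
  have hci₀ : c i₀ = a := Function.update_self ..
  have hc_of_ne {i : u} (hi : i ≠ i₀) : c i = R := Function.update_of_ne hi ..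
  have hc0 (i : u) : 0 ≤ 2 * c i := by
    rcases eq_or_ne i i₀ with rfl | hi
    · simpa [hci₀] using ha
    · simpa [hc_of_ne hi] using hR
  have hbox : {x : E | |⟪x, e⟫| ≤ a} ∩ ball 0 R ⊆ {x | ∀ i, |⟪b i, x⟫| ≤ c i} := by
    rintro x ⟨hxa, hxR⟩ i
    rcases eq_or_ne i i₀ with rfl | hi
    · rw [hci₀, hb, real_inner_comm]
      exact hxa
    · have hbi := abs_real_inner_le_norm (b i) x
      rw [b.norm_eq_one, one_mul] at hbi
      exact hc_of_ne hi ▸ hbi.trans (mem_ball_zero_iff.1 hxR).le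
  have hprod_ne_top : ∏ i, ENNReal.ofReal (2 * c i) ≠ ⊤ :=
    ENNReal.prod_ne_top fun _ _ => ENNReal.ofReal_ne_top
  calc volume.real ({x : E | |⟪x, e⟫| ≤ a} ∩ ball 0 R)
      ≤ (∏ i, ENNReal.ofReal (2 * c i)).toReal :=
        ENNReal.toReal_mono hprod_ne_top ((measure_mono hbox).trans_eq (volume_orthonormal_box b c))
    _ = ∏ i, 2 * c i := by simp only [ENNReal.toReal_prod, ENNReal.toReal_ofReal (hc0 _)]
    _ = 2 * c i₀ * ∏ i ∈ Finset.univ.erase i₀, 2 * c i :=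
        (Finset.mul_prod_erase _ _ (Finset.mem_univ i₀)).symm
    _ = 2 * a * ∏ i ∈ Finset.univ.erase i₀, 2 * R := by
        rw [hci₀, Finset.prod_congr rfl fun i hi => by rw [hc_of_ne (Finset.ne_of_mem_erase hi)]]
    _ = 2 * a * (2 * R) ^ (finrank ℝ E - 1) := by simp [finrank_eq_card_basis b.toBasis]

end Slab

section Packing

variable {E : Type*} [NormedAddCommGroup E] [InnerProductSpace ℝ E]

/-- The set of vectors making an angle of sine at most `a` with the hyperplane orthogonal to the
unit vector `e`. It is a double cone, thin when `a` is small, and replaces the slab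
`|⟪x, e⟫| ≤ a` where scaling invariance is needed. -/
def hyperplaneCone (e : E) (a : ℝ) : Set E := {x | |⟪x, e⟫| ≤ a * ‖x‖}

theorem isClosed_hyperplaneCone (e : E) (a : ℝ) : IsClosed (hyperplaneCone e a) :=
  isClosed_le (by fun_prop) (by fun_prop)

theorem smul_mem_hyperplaneCone (e : E) (a : ℝ) ⦃s : ℝ⦄ (hs : 0 < s) ⦃x : E⦄
    (hx : x ∈ hyperplaneCone e a) : s • x ∈ hyperplaneCone e a := by
  have hscaled : s * |⟪x, e⟫| ≤ s * (a * ‖x‖) := mul_le_mul_of_nonneg_left hx hs.le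
  simpa [hyperplaneCone, real_inner_smul_left, norm_smul, abs_mul, abs_of_pos hs,
    mul_left_comm] using hscaled

theorem hyperplaneCone_inter_ball_subset (e : E) {a : ℝ} (ha : 0 ≤ a) (R : ℝ) :
    hyperplaneCone e a ∩ ball 0 R ⊆ {x | |⟪x, e⟫| ≤ a * R} ∩ ball 0 R := fun _ hx =>
  ⟨hx.1.trans (mul_le_mul_of_nonneg_left (mem_ball_zero_iff.1 hx.2).le ha), hx.2⟩

theorem ball_subset_hyperplaneCone_inter_shell {e ν : E} (he : ‖e‖ = 1) (hν : ‖ν‖ = 1) {r t : ℝ}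
    (hr : r ≤ 1 / 2) (ht : |⟪ν, e⟫| ≤ t) :
    ball ν r ⊆ hyperplaneCone e (2 * (t + r)) ∩ (ball 0 (1 + r) \ ball 0 (1 - r)) := by
  intro x hx
  have hxν : ‖x - ν‖ < r := mem_ball_iff_norm.1 hx
  have hlower : 1 - r ≤ ‖x‖ := by
    have := norm_sub_norm_le ν x
    rw [norm_sub_rev] at this
    linarith
  have hupper : ‖x‖ < 1 + r := by linarith [norm_sub_norm_le x ν]
  have hslab : |⟪x, e⟫| ≤ t + r :=
    calc |⟪x, e⟫| = |⟪ν, e⟫ + ⟪x - ν, e⟫| := by rw [← inner_add_left, add_sub_cancel]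
      _ ≤ |⟪ν, e⟫| + |⟪x - ν, e⟫| := abs_add_le _ _
      _ ≤ t + ‖x - ν‖ * ‖e‖ := add_le_add ht (abs_real_inner_le_norm _ _)
      _ ≤ t + r := by rw [he, mul_one]; gcongr
  have hcone : |⟪x, e⟫| ≤ 2 * (t + r) * ‖x‖ :=
    calc |⟪x, e⟫| ≤ (t + r) * 1 := by rwa [mul_one]
      _ ≤ (t + r) * (2 * ‖x‖) :=
        mul_le_mul_of_nonneg_left (by linarith) ((abs_nonneg _).trans hslab)
      _ = 2 * (t + r) * ‖x‖ := by ring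
  exact ⟨hcone, mem_ball_zero_iff.2 hupper, fun h => (mem_ball_zero_iff.1 h).not_ge hlower⟩

variable [FiniteDimensional ℝ E]

theorem volume_real_hyperplaneCone_inter_shell_le [MeasurableSpace E] [BorelSpace E] {e : E}
    (he : ‖e‖ = 1) {a r : ℝ} (ha : 0 ≤ a) (hr : 0 ≤ r) (hr1 : r < 1) :
    volume.real (hyperplaneCone e a ∩ (ball 0 (1 + r) \ ball 0 (1 - r))) ≤
      4 * finrank ℝ E * 4 ^ (finrank ℝ E - 1) * (r * a) := by
  have hunit : volume.real (hyperplaneCone e a ∩ ball 0 1) ≤ 2 * a * 2 ^ (finrank ℝ E - 1) := by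
    have hslab := volume_real_slab_inter_ball_le he ha zero_le_one
    have hsub := hyperplaneCone_inter_ball_subset e ha 1
    rw [mul_one] at hslab hsub
    exact (measureReal_mono hsub
      (measure_ne_top_of_subset Set.inter_subset_right measure_ball_lt_top.ne)).trans hslab
  rw [measureReal_cone_inter_shell volume (smul_mem_hyperplaneCone e a)
    (isClosed_hyperplaneCone e a).measurableSet (sub_pos.2 hr1) (by linarith)]
  calc _ ≤ 2 * r * finrank ℝ E * 2 ^ (finrank ℝ E - 1) * (2 * a * 2 ^ (finrank ℝ E - 1)) :=
        mul_le_mul (one_add_pow_sub_one_sub_pow_le hr hr1.le _) hunit measureReal_nonneg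
          (by positivity)
    _ = 4 * finrank ℝ E * 4 ^ (finrank ℝ E - 1) * (r * a) := by
        rw [show (4 : ℝ) ^ (finrank ℝ E - 1) = 2 ^ (finrank ℝ E - 1) * 2 ^ (finrank ℝ E - 1) by
          rw [← mul_pow]; norm_num]
        ring

variable (E) [Nontrivial E]

theorem exists_card_mul_pow_le_of_separated :
    ∃ C : ℝ, 0 < C ∧ ∀ e : E, ‖e‖ = 1 → ∀ r t : ℝ, 0 < r → r ≤ 1 / 2 → 0 ≤ t →
      ∀ S : Finset E, (∀ ν ∈ S, ‖ν‖ = 1) → (∀ ν ∈ S, |⟪ν, e⟫| ≤ t) →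
      (S : Set E).Pairwise (fun ν ν' => 2 * r ≤ dist ν ν') →
        S.card * r ^ (finrank ℝ E - 1) ≤ C * (t + r) := by
  borelize E
  set d := finrank ℝ E
  have hd : 0 < d := finrank_pos
  set ω := volume.real (ball (0 : E) 1)
  have hω : 0 < ω := ENNReal.toReal_pos (measure_ball_pos _ _ one_pos).ne' measure_ball_lt_top.ne
  refine ⟨8 * d * 4 ^ (d - 1) / ω, by positivity, fun e he r t hr hr2 ht S hS hSt hsep => ?_⟩
  set A := hyperplaneCone e (2 * (t + r)) ∩ (ball 0 (1 + r) \ ball 0 (1 - r))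
  have hA : volume A ≠ ⊤ := measure_ne_top_of_subset
    (Set.inter_subset_right.trans Set.sdiff_subset) measure_ball_lt_top.ne
  have hvolume : S.card * (r ^ d * ω) ≤ 4 * d * 4 ^ (d - 1) * (r * (2 * (t + r))) :=
    (card_mul_measureReal_ball_le volume hr hsep hA fun ν hν =>
      ball_subset_hyperplaneCone_inter_shell he (hS ν hν) hr2 (hSt ν hν)).trans
      (volume_real_hyperplaneCone_inter_shell_le he (by positivity) hr.le (by linarith))
  rw [div_mul_eq_mul_div, le_div_iff₀ hω]
  refine le_of_mul_le_mul_left ?_ hr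
  calc r * (S.card * r ^ (d - 1) * ω) = S.card * (r ^ d * ω) := by
        rw [← mul_pow_sub_one hd.ne' r]; ring
    _ ≤ 4 * d * 4 ^ (d - 1) * (r * (2 * (t + r))) := hvolume
    _ = r * (8 * d * 4 ^ (d - 1) * (t + r)) := by ring

theorem exists_card_le_of_separated_of_abs_inner_le :
    ∃ C : ℝ, 0 < C ∧ ∀ e : E, ‖e‖ = 1 → ∀ L w : ℝ, 1 ≤ L → 1 ≤ w →
      ∀ S : Finset E, (∀ ν ∈ S, ‖ν‖ = 1) → (∀ ν ∈ S, |⟪ν, e⟫| ≤ w / L) →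
      (S : Set E).Pairwise (fun ν ν' => 1 / (16 * L) ≤ dist ν ν') →
        S.card ≤ C * L ^ ((finrank ℝ E : ℝ) - 2) * w := by
  obtain ⟨C, hC, hcard⟩ := exists_card_mul_pow_le_of_separated E
  set d := finrank ℝ E
  have hd : 0 < d := finrank_pos
  refine ⟨2 * C * 32 ^ (d - 1), by positivity, fun e he L w hL hw S hS hSt hsep => ?_⟩
  have hL0 : 0 < L := one_pos.trans_le hL
  have hr : 1 / (32 * L) ≤ 1 / 2 := by gcongr; linarith
  have hrt : 1 / (32 * L) ≤ w / L := by gcongr; linarith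
  have hr2 : 2 * (1 / (32 * L)) = 1 / (16 * L) := by field_simp; norm_num
  have hpow : L ^ ((d : ℝ) - 2) = L ^ (d - 1) / L := by
    rw [show (d : ℝ) - 2 = ((d - 1 : ℕ) : ℝ) - 1 by push_cast [hd]; ring,
      Real.rpow_sub_one hL0.ne', Real.rpow_natCast]
  have hbound : S.card * (1 / (32 * L)) ^ (d - 1) ≤ 2 * C * (w / L) :=
    calc S.card * (1 / (32 * L)) ^ (d - 1) ≤ C * (w / L + 1 / (32 * L)) :=
          hcard e he _ _ (by positivity) hr (by positivity) S hS hSt (hr2.symm ▸ hsep)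
      _ ≤ C * (w / L + w / L) := by gcongr
      _ = 2 * C * (w / L) := by ring
  calc (S.card : ℝ) = S.card * (1 / (32 * L)) ^ (d - 1) * (32 * L) ^ (d - 1) := by
        rw [mul_assoc, ← mul_pow, one_div_mul_cancel (by positivity), one_pow, mul_one]
    _ ≤ 2 * C * (w / L) * (32 * L) ^ (d - 1) := by gcongr
    _ = 2 * C * 32 ^ (d - 1) * L ^ ((d : ℝ) - 2) * w := by rw [hpow, mul_pow]; ring

end Packing

theorem sum_abs_comp_mul_le_mul_card {ι : Type*} {φ : ℝ → ℝ} {M c : ℝ} (hM : ∀ u, |φ u| ≤ M)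
    (hφ : ∀ u, 1 ≤ |u| → φ u = 0) (hc : 0 < c) (Θ : Finset ι) (f : ι → ℝ) :
    ∑ i ∈ Θ, |φ (c * f i)| ≤ M * (Θ.filter fun i => |f i| < c⁻¹).card := by
  have hsupp : ∀ i ∈ Θ, |φ (c * f i)| ≠ 0 → |f i| < c⁻¹ := by
    intro i _ hi
    have hlt : |c * f i| < 1 := not_le.1 fun h => hi (by rw [hφ _ h, abs_zero])
    rwa [abs_mul, abs_of_pos hc, mul_comm, ← lt_div_iff₀ hc, one_div] at hlt
  rw [← Finset.sum_filter_of_ne hsupp]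
  calc ∑ i ∈ Θ with |f i| < c⁻¹, |φ (c * f i)| ≤ ∑ i ∈ Θ with |f i| < c⁻¹, M :=
        Finset.sum_le_sum fun _ _ => hM _
    _ = M * (Θ.filter fun i => |f i| < c⁻¹).card := by
        rw [Finset.sum_const, nsmul_eq_mul, mul_comm]

theorem exists_norm_le_of_continuous_of_eq_zero {X F : Type*} [SeminormedAddCommGroup X]
    [ProperSpace X] [NormedAddCommGroup F] {f : X → F} (hf : Continuous f) {R : ℝ}
    (hf0 : ∀ x, R ≤ ‖x‖ → f x = 0) : ∃ M, ∀ x, ‖f x‖ ≤ M :=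
  hf.bounded_above_of_compact_support <|
    HasCompactSupport.intro (isCompact_closedBall 0 R) fun x hx =>
      hf0 x (not_le.1 (mt mem_closedBall_zero_iff.2 hx)).le

theorem stmt_general (E : Type*) [NormedAddCommGroup E] [InnerProductSpace ℝ E]
    [FiniteDimensional ℝ E] [Nontrivial E] :
    ∃ C : ℝ, 0 < C ∧ ∀ (φ : ℝ → ℝ) (M : ℝ), (∀ u, |φ u| ≤ M) → (∀ u, 1 ≤ |u| → φ u = 0) →
      ∀ s w : ℝ, 0 ≤ s → 1 ≤ w → ∀ Θ : Finset E, (∀ ν ∈ Θ, ‖ν‖ = 1) →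
      (∀ ν ∈ Θ, ∀ ν' ∈ Θ, ν ≠ ν' → (2 : ℝ) ^ (-4 - s) ≤ ‖ν - ν'‖) →
      ∀ ξ : E, ξ ≠ 0 →
        ∑ ν ∈ Θ, |φ ((2 : ℝ) ^ s * w⁻¹ * ⟪ν, ‖ξ‖⁻¹ • ξ⟫)| ≤
          C * M * (2 : ℝ) ^ (s * ((finrank ℝ E : ℝ) - 2)) * w := by
  obtain ⟨C, hC, hcard⟩ := exists_card_le_of_separated_of_abs_inner_le E
  refine ⟨C, hC, fun φ M hM hφ s w hs hw Θ hΘ hsep ξ hξ => ?_⟩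
  have hM0 : 0 ≤ M := (abs_nonneg _).trans (hM 0)
  have hsep_eq : (2 : ℝ) ^ (-4 - s) = 1 / (16 * 2 ^ s) := by
    rw [Real.rpow_sub two_pos, show (2 : ℝ) ^ (-4 : ℝ) = 1 / 16 by norm_num, div_div]
  have hscale : ((2 : ℝ) ^ s * w⁻¹)⁻¹ = w / 2 ^ s := by
    rw [mul_inv, inv_inv, mul_comm, div_eq_mul_inv]
  set S := Θ.filter fun ν => |⟪ν, ‖ξ‖⁻¹ • ξ⟫| < ((2 : ℝ) ^ s * w⁻¹)⁻¹
  have hSΘ : S ⊆ Θ := Finset.filter_subset _ _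
  have hSinner : ∀ ν ∈ S, |⟪ν, ‖ξ‖⁻¹ • ξ⟫| ≤ w / 2 ^ s := fun ν hν =>
    hscale ▸ (Finset.mem_filter.1 hν).2.le
  have hSsep : (S : Set E).Pairwise fun ν ν' => 1 / (16 * (2 : ℝ) ^ s) ≤ dist ν ν' :=
    fun ν hν ν' hν' hne => by
      simpa only [hsep_eq, dist_eq_norm] using hsep ν (hSΘ hν) ν' (hSΘ hν') hne
  have hScard : S.card ≤ C * ((2 : ℝ) ^ s) ^ ((finrank ℝ E : ℝ) - 2) * w :=
    hcard _ (norm_smul_inv_norm hξ) _ w (Real.one_le_rpow one_le_two hs) hw S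
      (fun ν hν => hΘ ν (hSΘ hν)) hSinner hSsep
  calc _ ≤ M * S.card := sum_abs_comp_mul_le_mul_card hM hφ (by positivity) Θ _
    _ ≤ M * (C * ((2 : ℝ) ^ s) ^ ((finrank ℝ E : ℝ) - 2) * w) := by gcongr
    _ = C * M * (2 : ℝ) ^ (s * ((finrank ℝ E : ℝ) - 2)) * w := by
        rw [← Real.rpow_mul two_pos.le]; ring

theorem stmt (d : ℕ) (hd : 2 ≤ d)
    (φ₀ : ℝ → ℝ) (hφ₀sm : ContDiff ℝ (⊤ : ℕ∞) φ₀)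
    (hφ₀1 : ∀ u : ℝ, |u| < 1/2 → φ₀ u = 1)
    (hφ₀0 : ∀ u : ℝ, 1 ≤ |u| → φ₀ u = 0)
    :
    ∃ C : ℝ, 0 < C ∧ ∀ n : ℕ, 1 ≤ n → ∀ Θ : Finset (Eu d),
      (∀ ν ∈ Θ, ‖ν‖ = 1) →
      (∀ ν ∈ Θ, ∀ ν' ∈ Θ, ν ≠ ν' → (2:ℝ)^(-4 - (n:ℝ)*gam) ≤ ‖ν - ν'‖) →
      ∀ ξ : Eu d, ξ ≠ 0 →
        (∑ ν ∈ Θ, |φ₀ ((2:ℝ)^((n:ℝ)*gam) * (n:ℝ)^(-5 : ℤ) * ⟪ν, ‖ξ‖⁻¹ • ξ⟫)|)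
          ≤ C * (2:ℝ)^((n:ℝ)*gam*((d:ℝ)-2)) * (n:ℝ)^(5:ℕ) := by
  obtain ⟨M, hM⟩ := exists_norm_le_of_continuous_of_eq_zero hφ₀sm.continuous hφ₀0
  have hM0 : 0 < M := one_pos.trans_le (by simpa [hφ₀1 0 (by norm_num)] using hM 0)
  have : Nontrivial (Eu d) := nontrivial_of_finrank_pos (R := ℝ) (by simp; omega)
  obtain ⟨C, hC, hsum⟩ := stmt_general (Eu d)
  refine ⟨C * M, mul_pos hC hM0, fun n hn Θ hΘ hsep ξ hξ => ?_⟩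
  have hs : 0 ≤ (n : ℝ) * gam := by unfold gam; positivity
  have hw : (1 : ℝ) ≤ (n : ℝ) ^ 5 := one_le_pow₀ (by exact_mod_cast hn)
  simpa using hsum φ₀ M hM hφ₀0 _ _ hs hw Θ hΘ hsep ξ hξ
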